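/- Let k be a field. The kernel of the k-algebra homomorphism from the polynomial ring k[x₁,…,x₆] to the group algebra k[ℤ³] sending x_i to the monomial χ^{h_i} (for h₁=(1,0,0), h₂=(0,1,0), h₃=(0,0,1), h₄=(-2,-1,2), h₅=(1,-1,1), h₆=(2,-2,1)) is the ideal generated by the five binomials x₅² − x₃x₆, x₁x₅ − x₂x₆, x₁x₃ − x₂x₅, x₁²x₂x₄ − x₃², and x₁³x₄ − x₃x₅. -/

import Mathlib

/-!
The map `x_i ↦ χ^{h_i}` is the map of monoid algebras induced by the additive homomorphism
`ℕ⁶ → ℤ³`, `n ↦ ∑ nᵢ hᵢ`, and the kernel of such a map is generated by the binomials of any set of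
pairs that generates the kernel congruence. To see that the five pairs of exponents at hand do,
choose in each class of the congruence they generate an exponent vector of minimal weight, for a
weight that distinguishes the two sides of each binomial. No such vector is divisible by one of the
heavier monomials `x₃²`, `x₃x₅`, `x₅²`, `x₂x₅`, `x₂x₆`, and a vector with this property can be
recovered from its image in `ℤ³`.
-/

open MvPolynomial

/-- The generators `h₁, …, h₆`, indexed by `Fin 6`. -/
def h : Fin 6 → Fin 3 → ℤ :=
  ![![1, 0, 0], ![0, 1, 0], ![0, 0, 1], ![-2, -1, 2], ![1, -1, 1], ![2, -2, 1]]

section MinimalRepresentatives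

variable {P Q W : Type*}

theorem addCon_eq_ker_of_injOn_minimalFor [Add P] [Add Q] [Preorder W] [WellFoundedLT W]
    {F : Type*} [FunLike F P Q] [AddHomClass F P Q] {c : AddCon P} {f : F} (w : P → W)
    (hc : c ≤ AddCon.ker f) (hf : Set.InjOn f {n | MinimalFor (c n) w n}) :
    c = AddCon.ker f := by
  have exists_minimal (a : P) : ∃ m, c a m ∧ MinimalFor (c m) w m := by
    obtain ⟨m, ham, hm⟩ := exists_minimalFor_of_wellFoundedLT (c a) w ⟨a, c.refl a⟩
    exact ⟨m, ham, c.refl m, fun _ hmj ↦ hm (c.trans ham hmj)⟩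
  refine le_antisymm hc fun a b hab ↦ ?_
  obtain ⟨a', haa', ha'⟩ := exists_minimal a
  obtain ⟨b', hbb', hb'⟩ := exists_minimal b
  have : a' = b' := hf ha' hb' ((hc haa').symm.trans (Eq.trans hab (hc hbb')))
  exact c.trans haa' (this ▸ c.symm hbb')

theorem not_le_of_minimalFor [AddZeroClass P] [LE P] [ExistsAddOfLE P] [AddZeroClass W]
    [Preorder W] [AddRightStrictMono W] {c : AddCon P} {w : P →+ W} {n u v : P}
    (hn : MinimalFor (c n) w n) (huv : c u v) (hw : w v < w u) : ¬ u ≤ n := by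
  intro hun
  obtain ⟨m, rfl⟩ := exists_add_of_le hun
  have hlt : w (v + m) < w (u + m) := by
    simpa only [map_add] using add_lt_add_left hw (w m)
  exact hlt.not_ge (hn.le_of_le (c.add huv (c.refl m)) hlt.le)

end MinimalRepresentatives

section BinomialIdeals

open AddMonoidAlgebra

variable {R P Q : Type*} [Ring R] [AddCommMonoid P]

/-- The congruence on exponents defined by an ideal `I` of a monoid algebra: `a` and `b` are
related when the binomial `χ^a - χ^b` lies in `I`. -/
def binomialCon (I : Ideal (AddMonoidAlgebra R P)) : AddCon P where
  r a b := single a 1 - single b 1 ∈ I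
  iseqv :=
    { refl a := by simp
      symm hab := by simpa using I.neg_mem hab
      trans hab hbc := by simpa using I.add_mem hab hbc }
  add' {a b c d} hab hcd := by
    have key : (single (a + c) 1 - single (b + d) 1 : AddMonoidAlgebra R P) =
        single c 1 * (single a 1 - single b 1) + single b 1 * (single c 1 - single d 1) := by
      simp [mul_sub, single_mul_single, add_comm]
    rw [key]
    exact I.add_mem (I.mul_mem_left _ hab) (I.mul_mem_left _ hcd)

theorem binomialCon_apply {I : Ideal (AddMonoidAlgebra R P)} {a b : P} :
    binomialCon I a b ↔ single a 1 - single b 1 ∈ I :=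
  Iff.rfl

theorem sub_mapDomain_mem {I : Ideal (AddMonoidAlgebra R P)} {g : P → P}
    (hg : ∀ a, binomialCon I a (g a)) (p : AddMonoidAlgebra R P) : p - mapDomain g p ∈ I := by
  induction p using AddMonoidAlgebra.induction_linear with
  | zero => simp
  | add p q hp hq => simpa [mapDomain_add, add_sub_add_comm] using I.add_mem hp hq
  | single a r =>
    simpa [mul_sub, single_mul_single] using
      I.mul_mem_left (single 0 r) (binomialCon_apply.1 (hg a))

variable [AddCommMonoid Q]

theorem ker_mapDomainRingHom_le {I : Ideal (AddMonoidAlgebra R P)} {f : P →+ Q}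
    (hf : AddCon.ker f ≤ binomialCon I) : RingHom.ker (mapDomainRingHom R f) ≤ I := by
  intro p hp
  have hsection (a : P) : binomialCon I a ((Function.invFun f ∘ f) a) :=
    hf (Function.invFun_eq ⟨a, rfl⟩).symm
  have hmap : mapDomain (Function.invFun f ∘ f) p = 0 := calc
    _ = mapDomain (Function.invFun f) (mapDomainRingHom R f p) := by
      simp [mapDomain, Finsupp.mapDomain_comp]
    _ = 0 := by rw [hp, mapDomain_zero]
  simpa only [hmap, sub_zero] using sub_mapDomain_mem hsection p

theorem ker_mapDomainRingHom_eq_span {f : P →+ Q} {S : Set (P × P)}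
    (hS : addConGen (fun u v ↦ (u, v) ∈ S) = AddCon.ker f) :
    RingHom.ker (mapDomainRingHom R f) =
      Ideal.span ((fun p ↦ single p.1 1 - single p.2 1) '' S) := by
  apply le_antisymm
  · apply ker_mapDomainRingHom_le
    rw [← hS, AddCon.addConGen_le]
    exact fun u v huv ↦ Ideal.subset_span ⟨(u, v), huv, rfl⟩
  · rw [Ideal.span_le]
    rintro _ ⟨⟨u, v⟩, huv, rfl⟩
    have hfuv : f u = f v := AddCon.addConGen_le.1 hS.le u v huv
    rw [SetLike.mem_coe, RingHom.mem_ker, map_sub, sub_eq_zero]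
    simp [hfuv]

end BinomialIdeals

theorem aeval_of'_eq_mapDomainAlgHom {R σ M : Type*} [CommSemiring R] [AddCommMonoid M]
    (g : σ → M) :
    (aeval fun i ↦ AddMonoidAlgebra.of' R M (g i) :
      MvPolynomial σ R →ₐ[R] AddMonoidAlgebra R M) =
      AddMonoidAlgebra.mapDomainAlgHom R R (Finsupp.weight g : (σ →₀ ℕ) →+ M) := by
  refine algHom_ext fun i ↦ ?_
  rw [aeval_X, X, ← single_eq_monomial]
  simp [AddMonoidAlgebra.of'_apply, Finsupp.weight_single]

theorem ker_aeval_of'_eq_span {R σ M : Type*} [CommRing R] [AddCommMonoid M] {g : σ → M}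
    {S : Set ((σ →₀ ℕ) × (σ →₀ ℕ))}
    (hS : addConGen (fun u v ↦ (u, v) ∈ S) = AddCon.ker (Finsupp.weight g)) :
    RingHom.ker (aeval fun i ↦ AddMonoidAlgebra.of' R M (g i) :
      MvPolynomial σ R →ₐ[R] AddMonoidAlgebra R M) =
      Ideal.span ((fun p ↦ monomial p.1 1 - monomial p.2 1) '' S) := by
  rw [aeval_of'_eq_mapDomainAlgHom]
  exact ker_mapDomainRingHom_eq_span hS

section ToricRelations

open Finsupp

theorem single_add_single_le_iff {σ M : Type*} [AddCommMonoid M] [PartialOrder M]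
    [CanonicallyOrderedAdd M] {n : σ →₀ M} {i j : σ} {a b : M} (hij : i ≠ j) :
    single i a + single j b ≤ n ↔ a ≤ n i ∧ b ≤ n j := by
  classical
  refine ⟨fun hle ↦ ⟨?_, ?_⟩, fun ⟨hi, hj⟩ k ↦ ?_⟩
  · simpa [hij] using hle i
  · simpa [hij.symm] using hle j
  · rcases eq_or_ne k i with rfl | hki
    · simpa [hij] using hi
    · rcases eq_or_ne k j with rfl | hkj
      · simpa [hij.symm] using hj
      · simp [hki, hkj]

/-- The pairs of exponent vectors of the five binomials that generate the toric ideal, the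
exponent of the positive term first. The index `i` stands for the variable `x_{i+1}`. -/
noncomputable def toricBinomials : Set ((Fin 6 →₀ ℕ) × (Fin 6 →₀ ℕ)) :=
  {(single 4 2, single 2 1 + single 5 1),
   (single 0 1 + single 4 1, single 1 1 + single 5 1),
   (single 0 1 + single 2 1, single 1 1 + single 4 1),
   (single 0 2 + single 1 1 + single 3 1, single 2 2),
   (single 0 3 + single 3 1, single 2 1 + single 4 1)}

/-- The congruence on exponent vectors generated by the five binomials. -/
noncomputable def toricCon : AddCon (Fin 6 →₀ ℕ) :=
  addConGen fun u v ↦ (u, v) ∈ toricBinomials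

/-- The weight that selects normal forms modulo the five binomials. Its values are chosen so that
the heavier monomials are the first one of `x₅² - x₃x₆` and the second one of each of the other
four binomials. -/
noncomputable def toricWeight : (Fin 6 →₀ ℕ) →+ ℕ :=
  weight ![0, 3, 2, 0, 2, 1]

/-- The exponent vectors of the standard monomials, those divisible by none of
`x₃²`, `x₃x₅`, `x₅²`, `x₂x₅`, `x₂x₆`. -/
def IsStandard (n : Fin 6 →₀ ℕ) : Prop :=
  ¬ single 2 2 ≤ n ∧ ¬ single 2 1 + single 4 1 ≤ n ∧ ¬ single 4 2 ≤ n ∧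
    ¬ single 1 1 + single 4 1 ≤ n ∧ ¬ single 1 1 + single 5 1 ≤ n

theorem toricCon_le_ker_weight : toricCon ≤ AddCon.ker (weight h) := by
  rw [toricCon, AddCon.addConGen_le]
  rintro u v (huv | huv | huv | huv | huv) <;> obtain ⟨rfl, rfl⟩ := Prod.mk.inj huv
  all_goals
    rw [AddCon.ker_apply]
    simp [h, weight_single]

theorem isStandard_of_minimalFor {n : Fin 6 →₀ ℕ}
    (hn : MinimalFor (toricCon n) toricWeight n) : IsStandard n := by
  have not_le_n (u v) (huv : (u, v) ∈ toricBinomials ∨ (v, u) ∈ toricBinomials)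
      (hw : toricWeight v < toricWeight u) : ¬ u ≤ n := by
    have rel := AddCon.addConGen_le.1 (le_refl toricCon)
    exact not_le_of_minimalFor hn (huv.elim (rel u v) fun hvu ↦ toricCon.symm (rel v u hvu)) hw
  refine ⟨not_le_n _ (single 0 2 + single 1 1 + single 3 1) ?_ ?_,
    not_le_n _ (single 0 3 + single 3 1) ?_ ?_,
    not_le_n _ (single 2 1 + single 5 1) ?_ ?_,
    not_le_n _ (single 0 1 + single 2 1) ?_ ?_,
    not_le_n _ (single 0 1 + single 4 1) ?_ ?_⟩
  all_goals simp [toricBinomials, toricWeight, weight_single]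

theorem isStandard_iff {n : Fin 6 →₀ ℕ} :
    IsStandard n ↔ n 2 ≤ 1 ∧ n 4 ≤ 1 ∧ (n 2 = 0 ∨ n 4 = 0) ∧ (n 1 = 0 ∨ n 4 = 0) ∧
      (n 1 = 0 ∨ n 5 = 0) := by
  rw [IsStandard, single_le_iff, single_le_iff, single_add_single_le_iff (by decide),
    single_add_single_le_iff (by decide), single_add_single_le_iff (by decide)]
  omega

theorem weight_h_eq (n : Fin 6 →₀ ℕ) :
    weight h n =
      ![(n 0 : ℤ) - 2 * n 3 + n 4 + 2 * n 5,
        (n 1 : ℤ) - n 3 - n 4 - 2 * n 5,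
        (n 2 : ℤ) + 2 * n 3 + n 4 + n 5] := by
  rw [weight_apply, sum_fintype _ _ (by simp), Fin.sum_univ_six]
  ext i
  fin_cases i <;> simp [h] <;> ring

theorem injOn_weight_isStandard : Set.InjOn (weight h) {n | IsStandard n} := by
  intro n hn m hm hnm
  replace hn := isStandard_iff.1 hn
  replace hm := isStandard_iff.1 hm
  simp only [weight_h_eq, Matrix.vecCons_inj, and_true] at hnm
  obtain ⟨hx, hy, hz⟩ := hnm
  -- The functional `2y + z` kills `h₁` and `h₄`, the two generators whose coefficients are not
  -- constrained in a standard vector, and its value there determines the other four coefficients.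
  have : 2 * n 1 + n 2 - n 4 - 3 * n 5 = (2 * m 1 + m 2 - m 4 - 3 * m 5 : ℤ) := by
    linarith
  obtain ⟨h₂, h₃, h₅, h₆⟩ : n 1 = m 1 ∧ n 2 = m 2 ∧ n 4 = m 4 ∧ n 5 = m 5 := by omega
  have h₄ : n 3 = m 3 := by omega
  have h₁ : n 0 = m 0 := by omega
  ext i
  fin_cases i <;> assumption

theorem toricCon_eq_ker_weight : toricCon = AddCon.ker (weight h) :=
  addCon_eq_ker_of_injOn_minimalFor toricWeight toricCon_le_ker_weight
    (injOn_weight_isStandard.mono fun _ ↦ isStandard_of_minimalFor)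

end ToricRelations

theorem toric_ideal_eq_general (k : Type*) [CommRing k] :
    RingHom.ker (MvPolynomial.aeval
        (fun i : Fin 6 => AddMonoidAlgebra.of' k (Fin 3 → ℤ) (h i)) :
      MvPolynomial (Fin 6) k →ₐ[k] AddMonoidAlgebra k (Fin 3 → ℤ)) =
    Ideal.span
      {(X 4) ^ 2 - X 2 * X 5,
       X 0 * X 4 - X 1 * X 5,
       X 0 * X 2 - X 1 * X 4,
       (X 0) ^ 2 * X 1 * X 3 - (X 2) ^ 2,
       (X 0) ^ 3 * X 3 - X 2 * X 4} := by
  rw [ker_aeval_of'_eq_span toricCon_eq_ker_weight]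
  simp [toricBinomials, Set.image_insert_eq, X, monomial_pow, monomial_mul]

/-- The kernel of the `k`-algebra map `k[x₁, …, x₆] → k[ℤ³]`, `x_i ↦ χ^{h_i}`, is generated
by the five binomials `x₅² - x₃x₆`, `x₁x₅ - x₂x₆`, `x₁x₃ - x₂x₅`, `x₁²x₂x₄ - x₃²`,
`x₁³x₄ - x₃x₅`. -/
theorem toric_ideal_eq (k : Type*) [Field k] :
    RingHom.ker (MvPolynomial.aeval
        (fun i : Fin 6 => AddMonoidAlgebra.of' k (Fin 3 → ℤ) (h i)) :
      MvPolynomial (Fin 6) k →ₐ[k] AddMonoidAlgebra k (Fin 3 → ℤ)) =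
    Ideal.span
      {(X 4) ^ 2 - X 2 * X 5,
       X 0 * X 4 - X 1 * X 5,
       X 0 * X 2 - X 1 * X 4,
       (X 0) ^ 2 * X 1 * X 3 - (X 2) ^ 2,
       (X 0) ^ 3 * X 3 - X 2 * X 4} :=
  toric_ideal_eq_general k
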